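/- arXiv:1410.1212 — 9 statements merged into one kernel-verified Lean document; each statement's English description precedes it below -/
import Mathlib

section
/- For all natural numbers n, m and every natural number k with 0 ≤ k ≤ m, one has p(n, m) ≥ p(n, k) + p(n, m − k), where the inequality is taken in the integers. -/
/-- The base-2 sum-of-digits function of degree `n`: the sum of the binary
digits of `m` at positions `≥ n`, i.e. the binary digit sum of `⌊m / 2^n⌋`. -/
def s (n m : ℕ) : ℕ := (Nat.digits 2 (m / 2 ^ n)).sum

/-- `p(n, m) = 2m - 2^(n+2) + 4 - s(n, m)`, as an integer. -/
def p (n m : ℕ) : ℤ := 2 * (m : ℤ) - 2 ^ (n + 2) + 4 - (s n m : ℤ)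

theorem dsum_rec (x : ℕ) : (Nat.digits 2 x).sum = x % 2 + (Nat.digits 2 (x / 2)).sum := by
  rcases Nat.eq_zero_or_pos x with h | h
  · subst h; simp
  · rw [Nat.digits_def' (by norm_num) h]; simp

theorem dsum_add (N : ℕ) : ∀ a b c : ℕ, a + b ≤ N → c ≤ 1 →
    (Nat.digits 2 (a + b + c)).sum ≤ (Nat.digits 2 a).sum + (Nat.digits 2 b).sum + c := by
  induction N with
  | zero =>
    intro a b c h hc
    obtain rfl : a = 0 := by omega
    obtain rfl : b = 0 := by omega
    interval_cases c <;> simp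
  | succ N ih =>
    intro a b c h hc
    by_cases h0 : a + b = 0
    · obtain rfl : a = 0 := by omega
      obtain rfl : b = 0 := by omega
      interval_cases c <;> simp
    · have h1 := ih (a / 2) (b / 2) ((a % 2 + b % 2 + c) / 2) (by omega) (by omega)
      have h2 : (a + b + c) / 2 = a / 2 + b / 2 + (a % 2 + b % 2 + c) / 2 := by omega
      rw [dsum_rec (a + b + c), dsum_rec a, dsum_rec b, h2]
      omega

/-- For all `n, m ∈ ℕ` and every `k` with `0 ≤ k ≤ m`,
`p(n, m) ≥ p(n, k) + p(n, m - k)`. -/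
theorem p_superadditive (n m k : ℕ) (hk : k ≤ m) :
    p n m ≥ p n k + p n (m - k) := by
  obtain ⟨j, rfl⟩ := Nat.exists_eq_add_of_le hk
  rw [Nat.add_sub_cancel_left]
  have key : s n (k + j) + 4 ≤ s n k + s n j + 2 ^ (n + 2) := by
    unfold s
    rcases Nat.eq_zero_or_pos n with h | h
    · subst h
      have := dsum_add _ k j 0 le_rfl (by norm_num)
      simpa using this
    · have hp : 2 ^ 3 ≤ 2 ^ (n + 2) := Nat.pow_le_pow_right (by norm_num) (by omega)
      have hd := Nat.add_div (a := k) (b := j) (c := 2 ^ n) (by positivity)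
      rw [hd]
      have := dsum_add _ (k / 2 ^ n) (j / 2 ^ n)
        (if 2 ^ n ≤ k % 2 ^ n + j % 2 ^ n then 1 else 0) le_rfl (by split_ifs <;> simp)
      have h3 : (if 2 ^ n ≤ k % 2 ^ n + j % 2 ^ n then 1 else 0) ≤ 1 := by split_ifs <;> simp
      omega
  unfold p
  have key' : (s n (k + j) : ℤ) + 4 ≤ s n k + s n j + 2 ^ (n + 2) := by exact_mod_cast key
  push_cast
  linarith
end

section
/- For all natural numbers n and m with m ≥ 2^{n+1} − 1, one has p(n, m) − 1 ≥ p(0, m − 2^{n+1} + 1), where the inequality is taken in the integers. -/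
theorem S_step (a : ℕ) : (Nat.digits 2 a).sum = a % 2 + (Nat.digits 2 (a / 2)).sum := by
  rcases Nat.eq_zero_or_pos a with rfl | h
  · simp
  · rw [Nat.digits_def' (by norm_num) h]; simp

theorem S_succ (a : ℕ) : (Nat.digits 2 (a + 1)).sum ≤ (Nat.digits 2 a).sum + 1 := by
  induction a using Nat.strong_induction_on with
  | _ a ih =>
    rw [S_step (a + 1), S_step a]
    rcases Nat.mod_two_eq_zero_or_one a with h | h
    · rw [show (a + 1) / 2 = a / 2 by omega]; omega
    · rw [show (a + 1) / 2 = a / 2 + 1 by omega]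
      have := ih (a / 2) (by omega)
      omega

theorem S_succ2 (a : ℕ) : (Nat.digits 2 (a + 2)).sum ≤ (Nat.digits 2 a).sum + 1 := by
  rw [S_step (a + 2), S_step a, show (a + 2) / 2 = a / 2 + 1 by omega]
  have := S_succ (a / 2)
  omega

theorem S_div (n a : ℕ) : (Nat.digits 2 (a / 2 ^ n)).sum ≤ (Nat.digits 2 a).sum := by
  induction n with
  | zero => simp
  | succ n ih =>
    have := S_step (a / 2 ^ n)
    rw [pow_succ, ← Nat.div_div_eq_div_mul]
    omega

/-- For all `n, m ∈ ℕ` with `m ≥ 2^(n+1) - 1`,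
`p(n, m) - 1 ≥ p(0, m - 2^(n+1) + 1)`. -/
theorem p_shift (n m : ℕ) (hm : 2 ^ (n + 1) - 1 ≤ m) :
    p n m - 1 ≥ p 0 (m + 1 - 2 ^ (n + 1)) := by
  obtain ⟨k, hk⟩ : ∃ k, m + 1 = k + 2 ^ (n + 1) := ⟨m + 1 - 2 ^ (n + 1), by omega⟩
  have h0 : m + 1 - 2 ^ (n + 1) = k := by omega
  have key : (Nat.digits 2 (m / 2 ^ n)).sum ≤ (Nat.digits 2 k).sum + 1 := by
    have hpos : 0 < 2 ^ n := by positivity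
    have hd := S_div n k
    have e := Nat.div_add_mod k (2 ^ n)
    have hr := Nat.mod_lt k hpos
    generalize k / 2 ^ n = q at *
    generalize k % 2 ^ n = r at *
    rw [pow_succ] at hk
    rcases Nat.eq_zero_or_pos r with h | h
    · have : m / 2 ^ n = q + 1 := by
        rw [Nat.div_eq_iff hpos]
        have : (q + 1) * 2 ^ n = 2 ^ n * q + 2 ^ n := by ring
        omega
      rw [this]
      have := S_succ q
      omega
    · have : m / 2 ^ n = q + 2 := by
        rw [Nat.div_eq_iff hpos]
        have : (q + 2) * 2 ^ n = 2 ^ n * q + 2 * 2 ^ n := by ring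
        omega
      rw [this]
      have := S_succ2 q
      omega
  rw [h0]
  have hz : (m : ℤ) + 1 = k + 2 ^ (n + 1) := by exact_mod_cast hk
  have hp : (2 : ℤ) ^ (n + 2) = 2 * 2 ^ (n + 1) := by ring
  unfold p s
  rw [hp]
  simp only [pow_zero, Nat.div_one]
  have key' : ((Nat.digits 2 (m / 2 ^ n)).sum : ℤ) ≤ ((Nat.digits 2 k).sum : ℕ) + 1 := by
    exact_mod_cast key
  have h4 : (2 : ℤ) ^ (0 + 2) = 4 := by norm_num
  linarith
end

section
/- (Main theorem.) Let n, m ∈ ℕ with m ≥ 2^{n+1} − 1. Then 2^{p(n,m)}·β(n, m) is an integer, where p(n, m) = 2m − 2^{n+2} + 4 − s(n, m); equivalently, if β(n, m) ≠ 0 then −ν(β(n, m)) ≤ 2m − 2^{n+2} + 4 − s(n, m), where ν is the 2-adic valuation on ℚ. -/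
theorem S_even (x : ℕ) : (Nat.digits 2 (2 * x)).sum = (Nat.digits 2 x).sum := by
  rcases Nat.eq_zero_or_pos x with h | h
  · subst h; simp
  · rw [Nat.digits_def' (by norm_num) (by omega)]; simp

theorem S_odd (x : ℕ) : (Nat.digits 2 (2 * x + 1)).sum = (Nat.digits 2 x).sum + 1 := by
  rw [Nat.digits_def' (by norm_num) (by omega)]
  have h1 : (2 * x + 1) % 2 = 1 := by omega
  have h2 : (2 * x + 1) / 2 = x := by omega
  rw [h1, h2, List.sum_cons]; omega

theorem S_pos (x : ℕ) (hx : 1 ≤ x) : 1 ≤ (Nat.digits 2 x).sum := by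
  induction x using Nat.strong_induction_on with
  | _ x ih =>
    obtain ⟨a, ha | ha⟩ := Nat.even_or_odd' x
    · have := ih a (by omega) (by omega)
      rw [ha, S_even]; exact this
    · rw [ha, S_odd]; omega

theorem S_add (x y : ℕ) :
    (Nat.digits 2 (x + y)).sum ≤ (Nat.digits 2 x).sum + (Nat.digits 2 y).sum := by
  induction h : x + y using Nat.strong_induction_on generalizing x y with
  | _ t ih =>
    subst h
    have one : (Nat.digits 2 1).sum = 1 := by simp
    obtain ⟨a, ha | ha⟩ := Nat.even_or_odd' x <;> obtain ⟨b, hb | hb⟩ := Nat.even_or_odd' y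
    · rcases Nat.eq_zero_or_pos (x + y) with h0 | h0
      · have hx : x = 0 := by omega
        have hy : y = 0 := by omega
        subst hx; subst hy; simp
      · have := ih (a + b) (by omega) a b rfl
        have e : x + y = 2 * (a + b) := by omega
        rw [e, S_even, ha, S_even, hb, S_even]; exact this
    · have := ih (a + b) (by omega) a b rfl
      have e : x + y = 2 * (a + b) + 1 := by omega
      rw [e, S_odd, ha, S_even, hb, S_odd]; omega
    · have := ih (a + b) (by omega) a b rfl
      have e : x + y = 2 * (a + b) + 1 := by omega
      rw [e, S_odd, ha, S_odd, hb, S_even]; omega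
    · have h1 := ih (a + b) (by omega) a b rfl
      have h2 := ih (a + b + 1) (by omega) (a + b) 1 rfl
      have e : x + y = 2 * (a + b + 1) := by omega
      rw [e, S_even, ha, S_odd, hb, S_odd]; omega

theorem s_succ (n m : ℕ) : s n m ≤ s (n + 1) m + 1 := by
  unfold s
  rw [pow_succ, ← Nat.div_div_eq_div_mul]
  obtain ⟨a, ha | ha⟩ := Nat.even_or_odd' (m / 2 ^ n)
  · have : m / 2 ^ n / 2 = a := by omega
    rw [this, ha, S_even]; omega
  · have : m / 2 ^ n / 2 = a := by omega
    rw [this, ha, S_odd]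

theorem s_add (n k l : ℕ) : s n (k + l) ≤ s n k + s n l + 1 := by
  unfold s
  have one : (Nat.digits 2 1).sum = 1 := by simp
  have h := S_add (k / 2 ^ n) (l / 2 ^ n)
  have h2 := S_add (k / 2 ^ n + l / 2 ^ n) 1
  rw [Nat.add_div (by positivity)]
  split_ifs
  · omega
  · rw [add_zero]; omega

theorem s_ceil (n j : ℕ) : (Nat.digits 2 ((j + 2 ^ n - 1) / 2 ^ n)).sum ≤ (Nat.digits 2 j).sum := by
  induction n with
  | zero => simp
  | succ n ih =>
    have hp : 0 < 2 ^ n := by positivity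
    have e : (j + 2 ^ (n + 1) - 1) / 2 ^ (n + 1) = ((j + 2 ^ n - 1) / 2 ^ n + 1) / 2 := by
      rw [pow_succ, ← Nat.div_div_eq_div_mul, ← Nat.add_div_right _ hp]
      congr 2; omega
    rw [e]
    refine le_trans ?_ ih
    generalize (j + 2 ^ n - 1) / 2 ^ n = c
    have one : (Nat.digits 2 1).sum = 1 := by simp
    obtain ⟨a, ha | ha⟩ := Nat.even_or_odd' c
    · have : (c + 1) / 2 = a := by omega
      rw [this, ha, S_even]
    · have : (c + 1) / 2 = a + 1 := by omega
      have h2 := S_add a 1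
      rw [this, ha, S_odd]; omega

theorem s_shift (n j : ℕ) : s n (j + 2 ^ (n + 1) - 1) ≤ (Nat.digits 2 j).sum + 1 := by
  unfold s
  have hp : 0 < 2 ^ n := by positivity
  have e : (j + 2 ^ (n + 1) - 1) / 2 ^ n = (j + 2 ^ n - 1) / 2 ^ n + 1 := by
    rw [← Nat.add_div_right _ hp]
    congr 1; rw [pow_succ]; omega
  rw [e]
  have one : (Nat.digits 2 1).sum = 1 := by simp
  have := S_add ((j + 2 ^ n - 1) / 2 ^ n) 1
  have := s_ceil n j
  omega

def DInt (e : ℤ) (x : ℚ) : Prop := ∃ z : ℤ, (2 : ℚ) ^ e * x = (z : ℚ)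

theorem DInt.zero (e : ℤ) : DInt e 0 := ⟨0, by simp⟩

theorem DInt.mul {e f : ℤ} {x y : ℚ} (hx : DInt e x) (hy : DInt f y) : DInt (e + f) (x * y) := by
  obtain ⟨a, ha⟩ := hx
  obtain ⟨b, hb⟩ := hy
  refine ⟨a * b, ?_⟩
  rw [zpow_add₀ (by norm_num)]; push_cast; rw [← ha, ← hb]; ring

theorem DInt.add {e : ℤ} {x y : ℚ} (hx : DInt e x) (hy : DInt e y) : DInt e (x + y) := by
  obtain ⟨a, ha⟩ := hx
  obtain ⟨b, hb⟩ := hy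
  exact ⟨a + b, by push_cast; rw [← ha, ← hb]; ring⟩

theorem DInt.sub {e : ℤ} {x y : ℚ} (hx : DInt e x) (hy : DInt e y) : DInt e (x - y) := by
  obtain ⟨a, ha⟩ := hx
  obtain ⟨b, hb⟩ := hy
  exact ⟨a - b, by push_cast; rw [← ha, ← hb]; ring⟩

theorem DInt.sum {e : ℤ} (t : Finset ℕ) (f : ℕ → ℚ) (h : ∀ k ∈ t, DInt e (f k)) :
    DInt e (∑ k ∈ t, f k) :=
  Finset.sum_induction f (DInt e) (fun _ _ => DInt.add) (DInt.zero e) h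

theorem DInt.one {e : ℤ} (h : 0 ≤ e) : DInt e 1 := by
  lift e to ℕ using h
  exact ⟨2 ^ e, by simp⟩

theorem DInt.mono {e f : ℤ} {x : ℚ} (h : e ≤ f) (hx : DInt e x) : DInt f x := by
  have := (DInt.one (sub_nonneg.2 h)).mul hx
  simpa using this

theorem DInt.two : DInt (-1) 2 := ⟨1, by norm_num⟩

theorem DInt.half : DInt 1 (1 / 2) := ⟨1, by norm_num⟩

open Finset in
theorem sum_zero_case (b : ℕ → ℚ) (m : ℕ) (hm : 1 ≤ m)
    (h : ∀ k, 1 ≤ k → k < m → DInt (p 0 k) (b k)) :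
    DInt (p 0 m - 1) (∑ k ∈ Icc 1 (m - 1), b k * b (m - k)) := by
  have hp : ∀ k, p 0 k = 2 * (k : ℤ) - ((Nat.digits 2 k).sum : ℤ) := by
    intro k; simp [p, s]
  have key : ∑ k ∈ Icc 1 (m - 1), b k * b (m - k)
      = 2 * (∑ k ∈ (Icc 1 (m - 1)).filter (fun k => 2 * k < m), b k * b (m - k))
        + ∑ k ∈ (Icc 1 (m - 1)).filter (fun k => 2 * k = m), b k * b (m - k) := by
    have e : ∑ k ∈ (Icc 1 (m - 1)).filter (fun k => 2 * k < m), b k * b (m - k)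
        = ∑ k ∈ (Icc 1 (m - 1)).filter (fun k => m < 2 * k), b k * b (m - k) := by
      refine Finset.sum_nbij' (fun k => m - k) (fun k => m - k) ?_ ?_ ?_ ?_ ?_
      · intro k hk; simp only [mem_filter, mem_Icc] at hk ⊢; omega
      · intro k hk; simp only [mem_filter, mem_Icc] at hk ⊢; omega
      · intro k hk; simp only [mem_filter, mem_Icc] at hk ⊢; omega
      · intro k hk; simp only [mem_filter, mem_Icc] at hk ⊢; omega
      · intro k hk
        simp only [mem_filter, mem_Icc] at hk
        have : m - (m - k) = k := by omega
        rw [this, mul_comm]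
    rw [two_mul]
    nth_rewrite 2 [e]
    simp only [sum_filter]
    rw [← sum_add_distrib, ← sum_add_distrib]
    refine sum_congr rfl fun k _ => ?_
    rcases lt_trichotomy (2 * k) m with h1 | h1 | h1
    · rw [if_pos h1, if_neg (by omega), if_neg (by omega)]; ring
    · rw [if_neg (by omega), if_neg (by omega), if_pos h1]; ring
    · rw [if_neg (by omega), if_pos h1, if_neg (by omega)]; ring
  rw [key]
  refine DInt.add ?_ ?_
  · have : DInt (p 0 m) (∑ k ∈ (Icc 1 (m - 1)).filter (fun k => 2 * k < m), b k * b (m - k)) := by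
      refine DInt.sum _ _ fun k hk => ?_
      simp only [mem_filter, mem_Icc] at hk
      refine DInt.mono ?_ ((h k (by omega) (by omega)).mul (h (m - k) (by omega) (by omega)))
      have := S_add k (m - k)
      have e : k + (m - k) = m := by omega
      rw [e] at this
      rw [hp, hp, hp]; omega
    exact DInt.mono (by omega) (DInt.two.mul this)
  · refine DInt.sum _ _ fun k hk => ?_
    simp only [mem_filter, mem_Icc] at hk
    refine DInt.mono ?_ ((h k (by omega) (by omega)).mul (h (m - k) (by omega) (by omega)))
    have e : m - k = k := by omega
    have h1 := S_even k
    have h2 := S_pos k (by omega)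
    rw [hk.2] at h1
    rw [e, hp, hp]; omega

open Finset in
/-- Main theorem: for `β : ℕ → ℕ → ℚ` satisfying the Ewing–Schober backward
recursion and `m ≥ 2^(n+1) - 1`, the rational `2^(p(n,m))·β(n,m)` is an
integer; equivalently, `-ν(β(n,m)) ≤ 2m - 2^(n+2) + 4 - s(n,m)` for
non-zero `β(n,m)`, where `ν` is the 2-adic valuation. -/
theorem two_pow_p_beta_int (β : ℕ → ℕ → ℚ)
    (hβ0 : ∀ n, β n 0 = 1)
    (hβzero : ∀ n m, 1 ≤ m → m ≤ 2 ^ (n + 1) - 2 → β n m = 0)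
    (hβrec : ∀ n m, 2 ^ (n + 1) - 1 ≤ m →
      β n m = (1 / 2) * (β (n + 1) m
        - ∑ k ∈ Icc (2 ^ (n + 1) - 1) (m + 1 - 2 ^ (n + 1)), β n k * β n (m - k)
        - β 0 (m + 1 - 2 ^ (n + 1))))
    (n m : ℕ) (hm : 2 ^ (n + 1) - 1 ≤ m) :
    ∃ z : ℤ, (2 : ℚ) ^ (p n m) * β n m = (z : ℚ) := by
  have hp0 : ∀ k, p 0 k = 2 * (k : ℤ) - ((Nat.digits 2 k).sum : ℤ) := by
    intro k; simp [p, s]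
  have pw : ∀ n : ℕ, (2 : ℤ) ^ (n + 2) = 2 * ((2 ^ (n + 1) : ℕ) : ℤ) := by
    intro n; push_cast; ring
  have main : ∀ m, 1 ≤ m → ∀ n, DInt (p n m) (β n m) := by
    intro m
    induction m using Nat.strong_induction_on with
    | _ m ih =>
      intro hm1
      have aux : ∀ d n, m ≤ n + d → DInt (p n m) (β n m) := by
        intro d
        induction d with
        | zero =>
          intro n hn
          have : n + 1 < 2 ^ (n + 1) := Nat.lt_two_pow_self
          rw [hβzero n m hm1 (by omega)]
          exact DInt.zero _
        | succ d ihd =>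
          intro n hn
          by_cases hlt : m ≤ 2 ^ (n + 1) - 2
          · rw [hβzero n m hm1 hlt]; exact DInt.zero _
          have hN : 2 ≤ 2 ^ (n + 1) := by
            have : 0 < 2 ^ n := by positivity
            rw [pow_succ]; omega
          have hpn := pw n
          have hpn' := pw (n + 1)
          have hsucc : 2 ^ (n + 1 + 1) = 2 * 2 ^ (n + 1) := by rw [pow_succ]; ring
          rw [hβrec n m (by omega)]
          have goal' : DInt (p n m - 1) (β (n + 1) m
            - ∑ k ∈ Icc (2 ^ (n + 1) - 1) (m + 1 - 2 ^ (n + 1)), β n k * β n (m - k)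
            - β 0 (m + 1 - 2 ^ (n + 1))) := by
            refine DInt.sub (DInt.sub ?_ ?_) ?_
            · refine DInt.mono ?_ (ihd (n + 1) (by omega))
              have := s_succ n m
              unfold p
              rw [hpn, hpn', hsucc]; omega
            · rcases Nat.eq_zero_or_pos n with h0 | h0
              · subst h0
                have := sum_zero_case (β 0) m hm1 (fun k h1 h2 => ih k h2 h1 0)
                simpa using this
              · refine DInt.sum _ _ fun k hk => ?_
                simp only [mem_Icc] at hk
                refine DInt.mono ?_ ((ih k (by omega) (by omega) n).mul
                  (ih (m - k) (by omega) (by omega) n))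
                have hs := s_add n k (m - k)
                have e : k + (m - k) = m := by omega
                rw [e] at hs
                have h4 : 4 ≤ 2 ^ (n + 1) := by
                  calc 4 = 2 ^ 2 := by norm_num
                    _ ≤ 2 ^ (n + 1) := Nat.pow_le_pow_right (by norm_num) (by omega)
                unfold p
                rw [hpn]; omega
            · have hs := s_shift n (m + 1 - 2 ^ (n + 1))
              have e : m + 1 - 2 ^ (n + 1) + 2 ^ (n + 1) - 1 = m := by omega
              rw [e] at hs
              rcases Nat.eq_zero_or_pos (m + 1 - 2 ^ (n + 1)) with h0 | h0
              · rw [h0, hβ0]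
                rw [h0] at hs
                apply DInt.one
                simp only [Nat.digits_zero, List.sum_nil] at hs
                unfold p
                rw [hpn]; omega
              · refine DInt.mono ?_ (ih _ (by omega) h0 0)
                rw [hp0]
                unfold p
                rw [hpn]; omega
          exact DInt.mono (by omega) (DInt.half.mul goal')
      intro n
      exact aux m n (by omega)
  have hm1 : 1 ≤ m := by
    have : 0 < 2 ^ n := by positivity
    rw [pow_succ] at hm; omega
  exact main m hm1 n
end

section
/- (Ahmed–Nguyen.) Let n ∈ ℕ and let m be a positive integer with 2^{n+1} − 1 ≤ m ≤ 2^{n+2} − 3. Then for every p ∈ ℕ, β(n, m) = β(n + p, m + 2^{n+1}·(2^p − 1)) = −(1/2)·β(0, m − 2^{n+1} + 1). -/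
open Finset in
/-- (Ahmed–Nguyen) For `β` satisfying the Ewing–Schober backward recursion,
`n ∈ ℕ` and a positive integer `m` with `2^(n+1) - 1 ≤ m ≤ 2^(n+2) - 3`,
for every `p ∈ ℕ`:
`β(n, m) = β(n + p, m + 2^(n+1)·(2^p - 1)) = -(1/2)·β(0, m - 2^(n+1) + 1)`. -/
theorem beta_shift (β : ℕ → ℕ → ℚ)
    (hβ0 : ∀ n, β n 0 = 1)
    (hβzero : ∀ n m, 1 ≤ m → m ≤ 2 ^ (n + 1) - 2 → β n m = 0)
    (hβrec : ∀ n m, 2 ^ (n + 1) - 1 ≤ m →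
      β n m = (1 / 2) * (β (n + 1) m
        - ∑ k ∈ Icc (2 ^ (n + 1) - 1) (m + 1 - 2 ^ (n + 1)), β n k * β n (m - k)
        - β 0 (m + 1 - 2 ^ (n + 1))))
    (n m : ℕ) (hm0 : 0 < m)
    (hm1 : 2 ^ (n + 1) - 1 ≤ m) (hm2 : m ≤ 2 ^ (n + 2) - 3) (p : ℕ) :
    β n m = β (n + p) (m + 2 ^ (n + 1) * (2 ^ p - 1)) ∧
    β n m = -(1 / 2) * β 0 (m + 1 - 2 ^ (n + 1)) := by
  have key : ∀ n m : ℕ, 0 < m → 2 ^ (n + 1) - 1 ≤ m → m ≤ 2 ^ (n + 2) - 3 →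
      β n m = -(1 / 2) * β 0 (m + 1 - 2 ^ (n + 1)) := by
    intro n m h0 h1 h2
    have e : 2 ^ (n + 2) = 2 * 2 ^ (n + 1) := by ring
    have hpos : 2 ≤ 2 ^ (n + 1) := by
      have := Nat.one_le_two_pow (n := n)
      rw [pow_succ]; omega
    have hz : β (n + 1) m = 0 := hβzero (n + 1) m h0 (by
      show m ≤ 2 ^ (n + 2) - 2
      omega)
    have hI : Icc (2 ^ (n + 1) - 1) (m + 1 - 2 ^ (n + 1)) = ∅ :=
      Finset.Icc_eq_empty (by omega)
    rw [hβrec n m h1, hz, hI]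
    simp
  refine ⟨?_, key n m hm0 hm1 hm2⟩
  have hA : 2 ≤ 2 ^ (n + 1) := by
    have := Nat.one_le_two_pow (n := n)
    rw [pow_succ]; omega
  have hle : 2 ^ (n + 1) ≤ 2 ^ (n + p + 1) := Nat.pow_le_pow_right (by norm_num) (by omega)
  have e : 2 ^ (n + 2) = 2 * 2 ^ (n + 1) := by ring
  have e' : 2 ^ (n + p + 2) = 2 * 2 ^ (n + p + 1) := by ring
  have hs : 2 ^ (n + 1) * (2 ^ p - 1) = 2 ^ (n + p + 1) - 2 ^ (n + 1) := by
    rw [Nat.mul_sub, mul_one, ← pow_add]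
    congr 2
    omega
  rw [hs, key n m hm0 hm1 hm2, key (n + p) _ (by omega) (by omega) (by omega)]
  congr 2
  omega
end

section
/- For every natural number n, β(n, 2^{n+2} − 2) = −(1/2)·(β(0, 2^{n+1} − 1) + 1/4). -/
open Finset in
/-- For `β` satisfying the Ewing–Schober backward recursion and every `n ∈ ℕ`,
`β(n, 2^(n+2) - 2) = -(1/2)·(β(0, 2^(n+1) - 1) + 1/4)`. -/
theorem beta_special_one (β : ℕ → ℕ → ℚ)
    (hβ0 : ∀ n, β n 0 = 1)
    (hβzero : ∀ n m, 1 ≤ m → m ≤ 2 ^ (n + 1) - 2 → β n m = 0)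
    (hβrec : ∀ n m, 2 ^ (n + 1) - 1 ≤ m →
      β n m = (1 / 2) * (β (n + 1) m
        - ∑ k ∈ Icc (2 ^ (n + 1) - 1) (m + 1 - 2 ^ (n + 1)), β n k * β n (m - k)
        - β 0 (m + 1 - 2 ^ (n + 1)))) (n : ℕ) :
    β n (2 ^ (n + 2) - 2) = -(1 / 2) * (β 0 (2 ^ (n + 1) - 1) + 1 / 4) := by
  obtain ⟨N, hN⟩ : ∃ N, 2 ^ (n + 1) = N + 2 := by
    have h1 : 2 ^ 1 ≤ 2 ^ (n + 1) := Nat.pow_le_pow_right (by norm_num) (by omega)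
    exact ⟨2 ^ (n + 1) - 2, by omega⟩
  have hN2 : 2 ^ (n + 2) = 2 * N + 4 := by
    rw [pow_succ, hN]; ring
  have hz := hβzero (n + 1)
  have h1 := hβrec n (N + 1) (by omega)
  have h2 := hβrec n (2 * N + 2) (by omega)
  have e1 : N + 2 - 1 = N + 1 := by omega
  have e2 : N + 1 + 1 - (N + 2) = 0 := by omega
  have e3 : 2 * N + 2 + 1 - (N + 2) = N + 1 := by omega
  have e4 : 2 * N + 2 - (N + 1) = N + 1 := by omega
  have e5 : 2 * N + 4 - 2 = 2 * N + 2 := by omega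
  rw [hN, e1, e2, hz (N + 1) (by omega) (by omega), Icc_eq_empty (by omega), hβ0] at h1
  rw [hN, e1, e3, hz (2 * N + 2) (by omega) (by omega), Icc_self, sum_singleton, e4, h1] at h2
  rw [hN, hN2, e1, e5, h2, sum_empty]
  ring
end

section
/- For every positive integer n, β(n, 2^{n+2}) = 1/16. -/
open PowerSeries in
inductive HS (f : ℚ⟦X⟧) : ℕ → ℚ⟦X⟧ → Prop
  | mono (a b : ℕ) : HS f (a + b) (X ^ a * f ^ b)
  | add (d : ℕ) (g h : ℚ⟦X⟧) : HS f d g → HS f d h → HS f d (g + h)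

open PowerSeries in
theorem HS.mul {f : ℚ⟦X⟧} {d e : ℕ} {g h : ℚ⟦X⟧} (hg : HS f d g) (hh : HS f e h) :
    HS f (d + e) (g * h) := by
  induction hg with
  | mono a b =>
    induction hh with
    | mono a' b' =>
      have := HS.mono (f := f) (a + a') (b + b')
      convert this using 1
      · omega
      · ring
    | add d g h _ _ h1 h2 =>
      rw [mul_add]
      exact HS.add _ _ _ h1 h2
  | add d g h _ _ h1 h2 =>
    rw [add_mul]
    exact HS.add _ _ _ h1 h2

open PowerSeries in
theorem HS.res {f : ℚ⟦X⟧} {d : ℕ} {g : ℚ⟦X⟧} (hg : HS f d g) :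
    coeff (d + 1) ((X * derivative ℚ f - f) * g) = 0 := by
  induction hg with
  | mono a b =>
    have h1 : (X * derivative ℚ f - f) * (X ^ a * f ^ b)
        = X ^ a * (X * (derivative ℚ f * f ^ b) - f ^ (b + 1)) := by ring
    have h2 : derivative ℚ (f ^ (b + 1)) = ((b + 1 : ℕ) : ℚ) • (derivative ℚ f * f ^ b) := by
      rw [Derivation.leibniz_pow]
      simp only [Nat.add_sub_cancel, smul_eq_mul]
      rw [Nat.cast_smul_eq_nsmul, mul_comm]
    have h3 := congrArg (coeff b) h2
    rw [coeff_derivative, coeff_smul] at h3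
    have h4 : ((b : ℚ) + 1) ≠ 0 := by positivity
    rw [h1, add_assoc, add_comm a, coeff_X_pow_mul, map_sub, coeff_succ_X_mul]
    have h5 : ((b : ℚ) + 1) * (coeff b (derivative ℚ f * f ^ b) - coeff (b + 1) (f ^ (b + 1))) = 0 := by
      push_cast [smul_eq_mul] at h3
      linarith
    exact (mul_eq_zero.mp h5).resolve_left h4
  | add d g h _ _ h1 h2 =>
    rw [mul_add, map_add, h1, h2, add_zero]

open Finset PowerSeries in
theorem G_rec (β : ℕ → ℕ → ℚ)
    (hβ0 : ∀ n, β n 0 = 1)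
    (hβzero : ∀ n m, 1 ≤ m → m ≤ 2 ^ (n + 1) - 2 → β n m = 0)
    (hβrec : ∀ n m, 2 ^ (n + 1) - 1 ≤ m →
      β n m = (1 / 2) * (β (n + 1) m
        - ∑ k ∈ Icc (2 ^ (n + 1) - 1) (m + 1 - 2 ^ (n + 1)), β n k * β n (m - k)
        - β 0 (m + 1 - 2 ^ (n + 1)))) (n : ℕ) :
    PowerSeries.mk (β (n + 1)) = PowerSeries.mk (β n) * PowerSeries.mk (β n)
      + X ^ (2 ^ (n + 1) - 1) * PowerSeries.mk (β 0) := by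
  ext m
  have hN : 2 ≤ 2 ^ (n + 1) := by
    have := Nat.one_le_two_pow (n := n)
    rw [pow_succ]; omega
  have hN2 : 2 ^ (n + 1 + 1) = 2 * 2 ^ (n + 1) := by ring
  have hz := hβzero n
  have hz' := hβzero (n + 1)
  have hr := hβrec n m
  rw [hN2] at hz'
  generalize 2 ^ (n + 1) = N at *
  rw [map_add, coeff_mul, coeff_X_pow_mul', Nat.sum_antidiagonal_eq_sum_range_succ_mk]
  simp only [coeff_mk]
  rcases Nat.eq_zero_or_pos m with rfl | hm
  · have : ¬ (N - 1 ≤ 0) := by omega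
    simp [hβ0, this]
  obtain ⟨p, rfl⟩ : ∃ p, m = p + 1 := ⟨m - 1, by omega⟩
  rw [sum_range_succ, sum_range_succ']
  simp only [hβ0, Nat.sub_self, Nat.sub_zero]
  split_ifs with h
  · have hs : ∑ k ∈ range p, β n (k + 1) * β n (p + 1 - (k + 1))
        = ∑ k ∈ Icc (N - 1) (p + 1 + 1 - N), β n k * β n (p + 1 - k) := by
      rw [sum_subset (s₁ := (Icc (N - 1) (p + 1 + 1 - N))) (s₂ := Icc 1 p)]
      · rw [← Finset.Ico_succ_right_eq_Icc, sum_Ico_eq_sum_range]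
        refine sum_congr (by simp) ?_
        intro k hk
        rw [add_comm 1 k]
      · intro k hk
        rw [mem_Icc] at *
        omega
      · intro k hk hk'
        rw [mem_Icc] at *
        by_cases h1 : k ≤ N - 2
        · rw [hz k (by omega) h1, zero_mul]
        · rw [hz (p + 1 - k) (by omega) (by omega), mul_zero]
    rw [hs]
    have := hr h
    rw [show p + 1 - (N - 1) = p + 1 + 1 - N by omega]
    linarith
  · rw [hz' _ (by omega) (by omega), hz (p + 1) (by omega) (by omega), sum_eq_zero]
    · simp
    · intro k hk
      rw [mem_range] at hk
      rw [hz (k + 1) (by omega) (by omega)]; simp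

open Finset PowerSeries in
theorem jungreis (β : ℕ → ℕ → ℚ)
    (hβ0 : ∀ n, β n 0 = 1)
    (hβzero : ∀ n m, 1 ≤ m → m ≤ 2 ^ (n + 1) - 2 → β n m = 0)
    (hβrec : ∀ n m, 2 ^ (n + 1) - 1 ≤ m →
      β n m = (1 / 2) * (β (n + 1) m
        - ∑ k ∈ Icc (2 ^ (n + 1) - 1) (m + 1 - 2 ^ (n + 1)), β n k * β n (m - k)
        - β 0 (m + 1 - 2 ^ (n + 1)))) (n : ℕ) (hn : 2 ≤ n) :
    β 0 (2 ^ n + 1) = 0 := by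
  have key : ∀ n, HS (PowerSeries.mk (β 0)) (2 ^ n) (PowerSeries.mk (β n)) := by
    intro n
    induction n with
    | zero => simpa using HS.mono (f := PowerSeries.mk (β 0)) 0 1
    | succ n ih =>
      rw [G_rec β hβ0 hβzero hβrec n]
      refine HS.add _ _ _ ?_ ?_
      · rw [pow_succ, mul_two]; exact ih.mul ih
      · have := HS.mono (f := PowerSeries.mk (β 0)) (2 ^ (n + 1) - 1) 1
        rwa [pow_one, Nat.sub_add_cancel Nat.one_le_two_pow] at this
  have h := (key n).res
  have hN : 4 ≤ 2 ^ n := by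
    calc 4 = 2 ^ 2 := by norm_num
      _ ≤ 2 ^ n := Nat.pow_le_pow_right (by norm_num) hn
  have hz := hβzero n
  rw [pow_succ] at hz
  have hc : ((2 ^ n : ℕ) : ℚ) ≠ 0 := by positivity
  generalize 2 ^ n = N at *
  rw [mul_comm, coeff_mul, Nat.sum_antidiagonal_eq_sum_range_succ_mk, sum_range_succ', sum_eq_zero] at h
  · simp only [coeff_mk, hβ0, Nat.sub_zero, map_sub, coeff_succ_X_mul, coeff_derivative] at h
    have : (N : ℚ) * β 0 (N + 1) = 0 := by linarith
    exact (mul_eq_zero.mp this).resolve_left hc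
  · intro k hk
    rw [mem_range] at hk
    simp only [coeff_mk]
    rw [hz (k + 1) (by omega) (by omega), zero_mul]



open Finset in
/-- For `β` satisfying the Ewing–Schober backward recursion and every positive
integer `n`, `β(n, 2^(n+2)) = 1/16`. -/
theorem beta_special_three (β : ℕ → ℕ → ℚ)
    (hβ0 : ∀ n, β n 0 = 1)
    (hβzero : ∀ n m, 1 ≤ m → m ≤ 2 ^ (n + 1) - 2 → β n m = 0)
    (hβrec : ∀ n m, 2 ^ (n + 1) - 1 ≤ m →
      β n m = (1 / 2) * (β (n + 1) m
        - ∑ k ∈ Icc (2 ^ (n + 1) - 1) (m + 1 - 2 ^ (n + 1)), β n k * β n (m - k)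
        - β 0 (m + 1 - 2 ^ (n + 1)))) (n : ℕ) (hn : 0 < n) :
    β n (2 ^ (n + 2)) = 1 / 16 := by
  have hJ := jungreis β hβ0 hβzero hβrec (n + 1) (by omega)
  have h01 : β 0 1 = -1 / 2 := by
    have h := hβrec 0 1 (by norm_num)
    have h2 := hβzero 1 1 (by norm_num) (by norm_num)
    norm_num [hβ0, h2] at h
    linarith
  have h02 : β 0 2 = 1 / 8 := by
    have h := hβrec 0 2 (by norm_num)
    have h2 := hβzero 1 2 (by norm_num) (by norm_num)
    norm_num [hβ0, h2, h01] at h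
    linarith
  have hA : ∀ n, 0 < n → β n (2 ^ (n + 1) - 1) = -1 / 2 ∧ β n (2 ^ (n + 1)) = 1 / 4 ∧
      β n (2 ^ (n + 1) + 1) = -1 / 16 := by
    intro n hn
    have hN : 4 ≤ 2 ^ (n + 1) := by
      calc 4 = 2 ^ 2 := by norm_num
        _ ≤ 2 ^ (n + 1) := Nat.pow_le_pow_right (by norm_num) (by omega)
    have hN2 : 2 ^ (n + 1 + 1) = 2 * 2 ^ (n + 1) := by ring
    have hz' := hβzero (n + 1)
    have hr := hβrec n
    rw [hN2] at hz'
    generalize 2 ^ (n + 1) = N at *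
    refine ⟨?_, ?_, ?_⟩
    · rw [hr _ le_rfl, hz' _ (by omega) (by omega), Icc_eq_empty (by omega),
        show N - 1 + 1 - N = 0 by omega, hβ0]
      norm_num
    · rw [hr _ (by omega), hz' _ (by omega) (by omega), Icc_eq_empty (by omega),
        show N + 1 - N = 1 by omega, h01]
      norm_num
    · rw [hr _ (by omega), hz' _ (by omega) (by omega), Icc_eq_empty (by omega),
        show N + 1 + 1 - N = 2 by omega, h02]
      norm_num
  obtain ⟨a, b, c⟩ := hA n hn
  obtain ⟨-, b', -⟩ := hA (n + 1) (by omega)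
  have hN : 4 ≤ 2 ^ (n + 1) := by
    calc 4 = 2 ^ 2 := by norm_num
      _ ≤ 2 ^ (n + 1) := Nat.pow_le_pow_right (by norm_num) (by omega)
  have hN2 : 2 ^ (n + 1 + 1) = 2 * 2 ^ (n + 1) := by ring
  have hN3 : 2 ^ (n + 2) = 2 * 2 ^ (n + 1) := by ring
  have hr := hβrec n
  rw [hN3]
  rw [hN2] at b'
  generalize 2 ^ (n + 1) = N at *
  obtain ⟨M, rfl⟩ : ∃ M, N = M + 1 := ⟨N - 1, by omega⟩
  rw [hr _ (by omega), b', show 2 * (M + 1) + 1 - (M + 1) = M + 1 + 1 by omega, hJ,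
    Nat.add_sub_cancel, sum_Icc_succ_top (by omega), sum_Icc_succ_top (by omega), Icc_self,
    sum_singleton, show 2 * (M + 1) - M = M + 1 + 1 by omega,
    show 2 * (M + 1) - (M + 1) = M + 1 by omega, show 2 * (M + 1) - (M + 1 + 1) = M by omega]
  rw [Nat.add_sub_cancel] at a
  rw [a, b, c]
  norm_num
end

section
/- For every integer n ≥ 2, β(n, 2^{n+2} + 2) = −(1/2)·β(0, 2^{n+1} + 3). -/
open Finset in
/-- For `β` satisfying the Ewing–Schober backward recursion and every `n ≥ 2`,
`β(n, 2^(n+2) + 2) = -(1/2)·β(0, 2^(n+1) + 3)`. -/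
theorem beta_special_four (β : ℕ → ℕ → ℚ)
    (hβ0 : ∀ n, β n 0 = 1)
    (hβzero : ∀ n m, 1 ≤ m → m ≤ 2 ^ (n + 1) - 2 → β n m = 0)
    (hβrec : ∀ n m, 2 ^ (n + 1) - 1 ≤ m →
      β n m = (1 / 2) * (β (n + 1) m
        - ∑ k ∈ Icc (2 ^ (n + 1) - 1) (m + 1 - 2 ^ (n + 1)), β n k * β n (m - k)
        - β 0 (m + 1 - 2 ^ (n + 1)))) (n : ℕ) (hn : 2 ≤ n) :
    β n (2 ^ (n + 2) + 2) = -(1 / 2) * β 0 (2 ^ (n + 1) + 3) := by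
  have a1 : β 0 1 = -1/2 := by
    have h := hβrec 0 1 (by norm_num)
    have z := hβzero 1 1 (by norm_num) (by norm_num)
    norm_num [z, hβ0] at h
    linarith
  have a2 : β 0 2 = 1/8 := by
    have h := hβrec 0 2 (by norm_num)
    have z := hβzero 1 2 (by norm_num) (by norm_num)
    norm_num [z, hβ0, a1] at h
    linarith
  have c3 : β 1 3 = -1/2 := by
    have h := hβrec 1 3 (by norm_num)
    have z := hβzero 2 3 (by norm_num) (by norm_num)
    norm_num [z, hβ0] at h
    linarith
  have c4 : β 1 4 = 1/4 := by
    have h := hβrec 1 4 (by norm_num)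
    have z := hβzero 2 4 (by norm_num) (by norm_num)
    norm_num [z, a1] at h
    linarith
  have a3 : β 0 3 = -1/4 := by
    have h := hβrec 0 3 (by norm_num)
    have e : Icc 1 2 = ({1, 2} : Finset ℕ) := by decide
    norm_num [c3, e, a1, a2] at h
    linarith
  have a4 : β 0 4 = 15/128 := by
    have h := hβrec 0 4 (by norm_num)
    have e : Icc 1 3 = ({1, 2, 3} : Finset ℕ) := by decide
    norm_num [c4, e, a1, a2, a3] at h
    linarith
  have key : ∀ p j, 2 ≤ p → j ≤ 4 → β p (2 ^ (p + 1) - 1 + j) = -(1/2) * β 0 j := by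
    intro p j hp hj
    have hN : 2 ^ 3 ≤ 2 ^ (p + 1) := Nat.pow_le_pow_right (by norm_num) (by omega)
    have h := hβrec p (2 ^ (p + 1) - 1 + j) (by omega)
    have e2 : 2 ^ (p + 1 + 1) = 2 * 2 ^ (p + 1) := by ring
    have z := hβzero (p + 1) (2 ^ (p + 1) - 1 + j) (by omega) (by omega)
    have e : 2 ^ (p + 1) - 1 + j + 1 - 2 ^ (p + 1) = j := by omega
    rw [z, e, Icc_eq_empty (by omega), sum_empty] at h
    rw [h]; ring
  have hN : 2 ^ 3 ≤ 2 ^ (n + 1) := Nat.pow_le_pow_right (by norm_num) (by omega)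
  have k0 := key n 0 hn (by norm_num)
  have k1 := key n 1 hn (by norm_num)
  have k2 := key n 2 hn (by norm_num)
  have k3 := key n 3 hn (by norm_num)
  have k4 := key n 4 hn (by norm_num)
  have kk := key (n + 1) 3 (by omega) (by norm_num)
  have e2 : 2 ^ (n + 1 + 1) = 2 * 2 ^ (n + 1) := by ring
  have e3 : 2 ^ (n + 2) = 2 * 2 ^ (n + 1) := by ring
  have h := hβrec n (2 ^ (n + 2) + 2) (by omega)
  rw [e2] at kk
  rw [e3] at h ⊢
  generalize 2 ^ (n + 1) = N at *
  obtain ⟨M, rfl⟩ : ∃ M, N = M + 1 := ⟨N - 1, by omega⟩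
  have f1 : 2 * (M + 1) + 2 + 1 - (M + 1) = M + 4 := by omega
  have f2 : 2 * (M + 1) - 1 + 3 = 2 * (M + 1) + 2 := by omega
  have e : Icc M (M + 4) = ({M, M + 1, M + 2, M + 3, M + 4} : Finset ℕ) := by
    ext x; simp only [mem_Icc, mem_insert, mem_singleton]; omega
  rw [f2] at kk
  simp only [Nat.add_sub_cancel, Nat.add_zero] at k0 k1 k2 k3 k4
  rw [f1, Nat.add_sub_cancel, e, kk] at h
  have g0 : 2 * (M + 1) + 2 - M = M + 4 := by omega
  have g1 : 2 * (M + 1) + 2 - (M + 1) = M + 3 := by omega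
  have g2 : 2 * (M + 1) + 2 - (M + 2) = M + 2 := by omega
  have g3 : 2 * (M + 1) + 2 - (M + 3) = M + 1 := by omega
  have g4 : 2 * (M + 1) + 2 - (M + 4) = M := by omega
  rw [sum_insert (by simp), sum_insert (by simp), sum_insert (by simp), sum_insert (by simp),
    sum_singleton, g0, g1, g2, g3, g4, k0, k1, k2, k3, k4, hβ0, a1, a2, a3, a4] at h
  rw [h, show M + 1 + 3 = M + 4 by omega]
  ring
end

section
/- For every integer n ≥ 2, β(n, 2^{n+2} + 4) = −(1/2)·β(0, 2^{n+1} + 5). -/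
open Finset in
/-- For `β` satisfying the Ewing–Schober backward recursion and every `n ≥ 2`,
`β(n, 2^(n+2) + 4) = -(1/2)·β(0, 2^(n+1) + 5)`. -/
theorem beta_special_five (β : ℕ → ℕ → ℚ)
    (hβ0 : ∀ n, β n 0 = 1)
    (hβzero : ∀ n m, 1 ≤ m → m ≤ 2 ^ (n + 1) - 2 → β n m = 0)
    (hβrec : ∀ n m, 2 ^ (n + 1) - 1 ≤ m →
      β n m = (1 / 2) * (β (n + 1) m
        - ∑ k ∈ Icc (2 ^ (n + 1) - 1) (m + 1 - 2 ^ (n + 1)), β n k * β n (m - k)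
        - β 0 (m + 1 - 2 ^ (n + 1)))) (n : ℕ) (hn : 2 ≤ n) :
    β n (2 ^ (n + 2) + 4) = -(1 / 2) * β 0 (2 ^ (n + 1) + 5) := by
  have z : ∀ n m, 1 ≤ m → m ≤ 2 ^ (n + 1) - 2 → β n m = 0 := hβzero
  have b00 := hβ0 0
  have b13 : β 1 3 = -1/2 := by
    rw [hβrec 1 3 (by norm_num), z 2 3 (by norm_num) (by norm_num)]; norm_num [b00]
  have b01 : β 0 1 = -1/2 := by
    rw [hβrec 0 1 (by norm_num), z 1 1 (by norm_num) (by norm_num)]; norm_num [b00]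
  have b02 : β 0 2 = 1/8 := by
    rw [hβrec 0 2 (by norm_num), z 1 2 (by norm_num) (by norm_num)]; norm_num [b01]
  have b14 : β 1 4 = 1/4 := by
    rw [hβrec 1 4 (by norm_num), z 2 4 (by norm_num) (by norm_num)]; norm_num [b01]
  have b15 : β 1 5 = -1/16 := by
    rw [hβrec 1 5 (by norm_num), z 2 5 (by norm_num) (by norm_num)]; norm_num [b02]
  have b03 : β 0 3 = -1/4 := by
    rw [hβrec 0 3 (by norm_num)]; norm_num [b13, sum_Icc_succ_top, b01, b02]
  have b04 : β 0 4 = 15/128 := by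
    rw [hβrec 0 4 (by norm_num)]; norm_num [b14, sum_Icc_succ_top, b01, b02, b03]
  have b05 : β 0 5 = 0 := by
    rw [hβrec 0 5 (by norm_num)]; norm_num [b15, sum_Icc_succ_top, b01, b02, b03, b04]
  have b16 : β 1 6 = 0 := by
    rw [hβrec 1 6 (by norm_num), z 2 6 (by norm_num) (by norm_num)]; norm_num [b03, b13]
  have b06 : β 0 6 = -47/1024 := by
    rw [hβrec 0 6 (by norm_num)]; norm_num [b16, sum_Icc_succ_top, b01, b02, b03, b04, b05]
  have hN : 8 ≤ 2 ^ (n + 1) := by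
    calc 8 = 2 ^ 3 := by norm_num
      _ ≤ 2 ^ (n + 1) := Nat.pow_le_pow_right (by norm_num) (by omega)
  have e2 : 2 ^ (n + 1 + 1) = 2 * 2 ^ (n + 1) := by ring
  have e3 : 2 ^ (n + 1 + 1 + 1) = 4 * 2 ^ (n + 1) := by ring
  have r0 := hβrec n
  have r1 := hβrec (n + 1) (2 * 2 ^ (n + 1) + 4)
  have z1 := z (n + 1)
  have z2 := z (n + 1 + 1) (2 * 2 ^ (n + 1) + 4)
  rw [show n + 2 = n + 1 + 1 from rfl]
  rw [e2] at r1 z1 ⊢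
  rw [e3] at z2
  generalize 2 ^ (n + 1) = N at *
  obtain ⟨M, rfl⟩ : ∃ M, N = M + 1 := ⟨N - 1, by omega⟩
  have key : ∀ j, j ≤ 6 → β n (M + j) = -(1/2) * β 0 j := by
    intro j hj
    rw [r0 (M + j) (by omega), z1 (M + j) (by omega) (by omega), Icc_eq_empty (by omega),
      show M + j + 1 - (M + 1) = j by omega]
    simp
  have h1 : β (n + 1) (2 * (M + 1) + 4) = 0 := by
    rw [r1 (by omega), z2 (by omega) (by omega), Icc_eq_empty (by omega),
      show 2 * (M + 1) + 4 + 1 - 2 * (M + 1) = 5 by omega, b05]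
    simp
  have hs : ∑ k ∈ Icc M (M + 6), β n k * β n (2 * (M + 1) + 4 - k) = 0 := by
    rw [← Finset.Ico_add_one_right_eq_Icc, Finset.sum_Ico_eq_sum_range,
      show M + 6 + 1 - M = 7 by omega]
    have : ∀ j ∈ range 7, β n (M + j) * β n (2 * (M + 1) + 4 - (M + j))
        = (1/4) * (β 0 j * β 0 (6 - j)) := by
      intro j hj
      have hj' := mem_range.mp hj
      rw [show 2 * (M + 1) + 4 - (M + j) = M + (6 - j) by omega, key j (by omega),
        key (6 - j) (by omega)]
      ring
    rw [sum_congr rfl this]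
    norm_num [sum_range_succ, b00, b01, b02, b03, b04, b05, b06]
  rw [r0 _ (by omega), h1, show M + 1 - 1 = M by omega,
    show 2 * (M + 1) + 4 + 1 - (M + 1) = M + 6 by omega, hs]
  rw [show M + 1 + 5 = M + 6 by omega]
  ring
end

section
/- For every integer n ≥ 3, β(n, 2^{n+2} + 6) = −(1/2)·β(0, 2^{n+1} + 7). -/
open Finset in
/-- For `β` satisfying the Ewing–Schober backward recursion and every `n ≥ 3`,
`β(n, 2^(n+2) + 6) = -(1/2)·β(0, 2^(n+1) + 7)`. -/
theorem beta_special_six (β : ℕ → ℕ → ℚ)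
    (hβ0 : ∀ n, β n 0 = 1)
    (hβzero : ∀ n m, 1 ≤ m → m ≤ 2 ^ (n + 1) - 2 → β n m = 0)
    (hβrec : ∀ n m, 2 ^ (n + 1) - 1 ≤ m →
      β n m = (1 / 2) * (β (n + 1) m
        - ∑ k ∈ Icc (2 ^ (n + 1) - 1) (m + 1 - 2 ^ (n + 1)), β n k * β n (m - k)
        - β 0 (m + 1 - 2 ^ (n + 1)))) (n : ℕ) (hn : 3 ≤ n) :
    β n (2 ^ (n + 2) + 6) = -(1 / 2) * β 0 (2 ^ (n + 1) + 7) := by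
  have z3_7 : β 3 7 = 0 := hβzero 3 7 (by norm_num) (by norm_num)
  have z3_8 : β 3 8 = 0 := hβzero 3 8 (by norm_num) (by norm_num)
  have z2_3 : β 2 3 = 0 := hβzero 2 3 (by norm_num) (by norm_num)
  have z2_4 : β 2 4 = 0 := hβzero 2 4 (by norm_num) (by norm_num)
  have z2_5 : β 2 5 = 0 := hβzero 2 5 (by norm_num) (by norm_num)
  have z2_6 : β 2 6 = 0 := hβzero 2 6 (by norm_num) (by norm_num)
  have z1_1 : β 1 1 = 0 := hβzero 1 1 (by norm_num) (by norm_num)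
  have z1_2 : β 1 2 = 0 := hβzero 1 2 (by norm_num) (by norm_num)
  have v0_1 : β 0 1 = -1/2 := by
    have h := hβrec 0 1 (by norm_num)
    norm_num [Finset.sum_Icc_succ_top, z1_1, hβ0] at h
    linarith
  have v0_2 : β 0 2 = 1/8 := by
    have h := hβrec 0 2 (by norm_num)
    norm_num [Finset.sum_Icc_succ_top, z1_2, v0_1, hβ0] at h
    linarith
  have v1_3 : β 1 3 = -1/2 := by
    have h := hβrec 1 3 (by norm_num)
    norm_num [Finset.sum_Icc_succ_top, z2_3, hβ0] at h
    linarith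
  have v0_3 : β 0 3 = -1/4 := by
    have h := hβrec 0 3 (by norm_num)
    norm_num [Finset.sum_Icc_succ_top, v1_3, v0_1, v0_2, hβ0] at h
    linarith
  have v1_4 : β 1 4 = 1/4 := by
    have h := hβrec 1 4 (by norm_num)
    norm_num [Finset.sum_Icc_succ_top, z2_4, v0_1, hβ0] at h
    linarith
  have v0_4 : β 0 4 = 15/128 := by
    have h := hβrec 0 4 (by norm_num)
    norm_num [Finset.sum_Icc_succ_top, v1_4, v0_1, v0_2, v0_3, hβ0] at h
    linarith
  have v1_5 : β 1 5 = -1/16 := by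
    have h := hβrec 1 5 (by norm_num)
    norm_num [Finset.sum_Icc_succ_top, z2_5, v0_2, hβ0] at h
    linarith
  have v0_5 : β 0 5 = 0 := by
    have h := hβrec 0 5 (by norm_num)
    norm_num [Finset.sum_Icc_succ_top, v1_5, v0_1, v0_2, v0_3, v0_4, hβ0] at h
    linarith
  have v1_6 : β 1 6 = 0 := by
    have h := hβrec 1 6 (by norm_num)
    norm_num [Finset.sum_Icc_succ_top, z2_6, v1_3, v0_3, hβ0] at h
    linarith
  have v0_6 : β 0 6 = -47/1024 := by
    have h := hβrec 0 6 (by norm_num)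
    norm_num [Finset.sum_Icc_succ_top, v1_6, v0_1, v0_2, v0_3, v0_4, v0_5, hβ0] at h
    linarith
  have v2_7 : β 2 7 = -1/2 := by
    have h := hβrec 2 7 (by norm_num)
    norm_num [Finset.sum_Icc_succ_top, z3_7, hβ0] at h
    linarith
  have v1_7 : β 1 7 = -47/256 := by
    have h := hβrec 1 7 (by norm_num)
    norm_num [Finset.sum_Icc_succ_top, v2_7, v1_3, v1_4, v0_4, hβ0] at h
    linarith
  have v0_7 : β 0 7 = -1/16 := by
    have h := hβrec 0 7 (by norm_num)
    norm_num [Finset.sum_Icc_succ_top, v1_7, v0_1, v0_2, v0_3, v0_4, v0_5, v0_6, hβ0] at h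
    linarith
  have v2_8 : β 2 8 = 1/4 := by
    have h := hβrec 2 8 (by norm_num)
    norm_num [Finset.sum_Icc_succ_top, z3_8, v0_1, hβ0] at h
    linarith
  have v1_8 : β 1 8 = 1/16 := by
    have h := hβrec 1 8 (by norm_num)
    norm_num [Finset.sum_Icc_succ_top, v2_8, v1_3, v1_4, v1_5, v0_5, hβ0] at h
    linarith
  have v0_8 : β 0 8 = 987/32768 := by
    have h := hβrec 0 8 (by norm_num)
    norm_num [Finset.sum_Icc_succ_top, v1_8, v0_1, v0_2, v0_3, v0_4, v0_5, v0_6, v0_7, hβ0] at h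
    linarith
  have hN : 2 ^ 4 ≤ 2 ^ (n + 1) := Nat.pow_le_pow_right (by norm_num) (by omega)
  have e2 : 2 ^ (n + 2) = 2 * 2 ^ (n + 1) := by ring
  have e3 : 2 ^ (n + 3) = 4 * 2 ^ (n + 1) := by ring
  have r := hβrec n (2 ^ (n + 2) + 6) (by omega)
  have r1 := hβrec (n + 1) (2 ^ (n + 2) + 6) (by rw [show n + 1 + 1 = n + 2 from rfl]; omega)
  have r2 := hβzero (n + 2) (2 ^ (n + 2) + 6) (by omega)
    (by rw [show n + 2 + 1 = n + 3 from rfl]; omega)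
  rw [show n + 1 + 1 = n + 2 from rfl] at r1
  rw [r2, Finset.Icc_eq_empty (by omega), Finset.sum_empty,
    show 2 ^ (n + 2) + 6 + 1 - 2 ^ (n + 2) = 7 by omega, v0_7] at r1
  have key : ∀ j, j ≤ 8 → β n (2 ^ (n + 1) - 1 + j) = -(1 / 2) * β 0 j := by
    intro j hj
    have q := hβrec n (2 ^ (n + 1) - 1 + j) (by omega)
    have q1 := hβzero (n + 1) (2 ^ (n + 1) - 1 + j) (by omega)
      (by rw [show n + 1 + 1 = n + 2 from rfl]; omega)
    rw [q1, Finset.Icc_eq_empty (by omega), Finset.sum_empty,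
      show 2 ^ (n + 1) - 1 + j + 1 - 2 ^ (n + 1) = j by omega] at q
    rw [q]; ring
  have hs : ∑ k ∈ Icc (2 ^ (n + 1) - 1) (2 ^ (n + 2) + 6 + 1 - 2 ^ (n + 1)),
      β n k * β n (2 ^ (n + 2) + 6 - k)
      = ∑ j ∈ range 9, (-(1 / 2) * β 0 j) * (-(1 / 2) * β 0 (8 - j)) := by
    symm
    refine Finset.sum_bij (fun j _ => 2 ^ (n + 1) - 1 + j) ?_ ?_ ?_ ?_
    · intro j hj
      rw [Finset.mem_range] at hj
      rw [Finset.mem_Icc]; omega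
    · intro a _ b _ h
      omega
    · intro k hk
      rw [Finset.mem_Icc] at hk
      exact ⟨k - (2 ^ (n + 1) - 1), by rw [Finset.mem_range]; omega, by omega⟩
    · intro j hj
      rw [Finset.mem_range] at hj
      rw [key j (by omega), show 2 ^ (n + 2) + 6 - (2 ^ (n + 1) - 1 + j)
        = 2 ^ (n + 1) - 1 + (8 - j) by omega, key (8 - j) (by omega)]
  rw [hs, r1, show 2 ^ (n + 2) + 6 + 1 - 2 ^ (n + 1) = 2 ^ (n + 1) + 7 by omega] at r
  rw [r]
  norm_num [Finset.sum_range_succ, hβ0, v0_1, v0_2, v0_3, v0_4, v0_5, v0_6, v0_7, v0_8]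
  try ring
end
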